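/- Let $n \ge 1$, let $a, b$ be nonzero $n \times n$ complex matrices, let $p > 1$ and $q > 1$ satisfy $1/p + 1/q = 1$. Then $\|a b^*\|_1 = \|a\|_p \, \|b\|_q$ if and only if there exists a real number $\lambda \ge 0$ such that $|a|^p = \lambda \, |b|^q$ (as matrices, i.e. $|a|^p$ equals the scalar multiple $\lambda \cdot |b|^q$). -/

import Mathlib

open Matrix
open scoped ComplexOrder

open scoped MatrixOrder in
/-- `matAbs x` is `|x|`, the unique positive semidefinite square root of `xᴴ * x`. -/
noncomputable def matAbs {n : ℕ} (x : Matrix (Fin n) (Fin n) ℂ) : Matrix (Fin n) (Fin n) ℂ :=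
  CFC.sqrt (xᴴ * x)

/-- `matRpow x r` is the real power `x ^ r` defined via the continuous functional calculus. -/
noncomputable def matRpow {n : ℕ} (x : Matrix (Fin n) (Fin n) ℂ) (r : ℝ) :
    Matrix (Fin n) (Fin n) ℂ :=
  cfc (fun t : ℝ => t ^ r) x

/-- The Schatten `r`-norm `(Tr(|x|^r))^(1/r)`. -/
noncomputable def schatten {n : ℕ} (r : ℝ) (x : Matrix (Fin n) (Fin n) ℂ) : ℝ :=
  (Matrix.trace (matRpow (matAbs x) r)).re ^ (1 / r)

/-!
Polar decomposition gives `Tr |a b*| = Tr | |a| |b| |`, which reduces everything to positive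
semidefinite `A = |a|` and `B = |b|`.

If equality holds, normalize so that `Tr A ^ p = Tr B ^ q = 1` and choose a unitary `W` with
`Tr |A B| = Tr (W A B) = 1`. In eigenbases of `A` and `B`, with eigenvalues `α i` and `β j`, this
trace is `∑ N j i * α i * M i j * β j` with `M`, `N` unitary, hence at most `∑ s i j * (α i * β j)`
for the doubly stochastic weights `s i j = (|N j i|² + |M i j|²) / 2`. Young's inequality bounds
the latter by `1 / p + 1 / q = 1`, so it is an equality wherever `s i j ≠ 0`. Thus
`α i ^ p = β j ^ q` whenever `M i j ≠ 0`, which says exactly that `A ^ p = B ^ q`.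

Conversely `A ^ p = c B ^ q` gives `A = c ^ (1 / p) B ^ (q / p)`, so that
`A B = c ^ (1 / p) B ^ q` is positive semidefinite and both sides can be computed.
-/

section PolarDecomposition

theorem exists_linearIsometryEquiv_apply_eq_of_norm_eq {𝕜 E F : Type*} [RCLike 𝕜] [AddCommGroup E]
    [Module 𝕜 E] [NormedAddCommGroup F] [InnerProductSpace 𝕜 F] [FiniteDimensional 𝕜 F]
    (x y : E →ₗ[𝕜] F) (h : ∀ v, ‖x v‖ = ‖y v‖) : ∃ U : F ≃ₗᵢ[𝕜] F, ∀ v, x v = U (y v) := by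
  obtain ⟨s, hs⟩ := y.rangeRestrict.exists_rightInverse_of_surjective y.range_rangeRestrict
  have y_section (w : y.range) : y (s w) = w := congrArg Subtype.val (LinearMap.congr_fun hs w)
  have x_section (v : E) : x (s ⟨y v, v, rfl⟩) = x v := by
    rw [← sub_eq_zero, ← map_sub, ← norm_eq_zero, h, map_sub, y_section, sub_self, norm_zero]
  let L : y.range →ₗᵢ[𝕜] F :=
    { toLinearMap := x ∘ₗ s
      norm_map' := fun w ↦ by rw [LinearMap.comp_apply, h, y_section, Submodule.coe_norm] }
  refine ⟨L.extend.toLinearIsometryEquiv rfl, fun v ↦ ?_⟩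
  calc x v = L ⟨y v, v, rfl⟩ := (x_section v).symm
    _ = L.extend (y v) := (L.extend_apply ⟨y v, v, rfl⟩).symm

variable {ι 𝕜 : Type*} [Fintype ι] [DecidableEq ι] [RCLike 𝕜]

theorem exists_mem_unitaryGroup_eq_mul_of_conjTranspose_mul_self_eq {x y : Matrix ι ι 𝕜}
    (h : xᴴ * x = yᴴ * y) : ∃ U ∈ unitaryGroup ι 𝕜, x = U * y := by
  let T := toEuclideanCLM (n := ι) (𝕜 := 𝕜)
  have norm_sq_apply (z : Matrix ι ι 𝕜) (v) :
      ‖T z v‖ ^ 2 = RCLike.re (inner 𝕜 (T (zᴴ * z) v) v) := by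
    rw [ContinuousLinearMap.apply_norm_sq_eq_inner_adjoint_left, map_mul, ← star_eq_conjTranspose,
      map_star, ContinuousLinearMap.star_eq_adjoint]
    rfl
  have norm_apply_eq (v) : ‖T x v‖ = ‖T y v‖ := by
    rw [← sq_eq_sq₀ (norm_nonneg _) (norm_nonneg _), norm_sq_apply, norm_sq_apply, h]
  obtain ⟨U, hU⟩ := exists_linearIsometryEquiv_apply_eq_of_norm_eq
    (T x : EuclideanSpace 𝕜 ι →ₗ[𝕜] EuclideanSpace 𝕜 ι) (T y) norm_apply_eq
  let u := Unitary.linearIsometryEquiv.symm U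
  refine ⟨T.symm u, Unitary.map_mem T.symm u.2, T.injective ?_⟩
  ext1 v
  have T_symm : T (T.symm u * y) = u * T y := by rw [map_mul, T.apply_symm_apply]
  exact (hU v).trans congr($T_symm v).symm

end PolarDecomposition

section DoublyStochastic

variable {ι κ 𝕜 : Type*} [Fintype ι] [Fintype κ] [RCLike 𝕜]

theorem map_norm_sq_mem_doublyStochastic [DecidableEq ι] {U : Matrix ι ι 𝕜}
    (hU : U ∈ unitaryGroup ι 𝕜) : U.map (‖·‖ ^ 2) ∈ doublyStochastic ℝ ι := by
  have sum_row {V : Matrix ι ι 𝕜} (hV : V ∈ unitaryGroup ι 𝕜) (i : ι) : ∑ j, ‖V i j‖ ^ 2 = 1 := by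
    have h := congrFun₂ (mem_unitaryGroup_iff.1 hV) i i
    simp only [mul_apply, star_apply, RCLike.star_def, RCLike.mul_conj, one_apply_eq] at h
    exact_mod_cast h
  refine mem_doublyStochastic_iff_sum.2 ⟨fun i j ↦ sq_nonneg _, sum_row hU, fun j ↦ ?_⟩
  simpa using sum_row (Unitary.star_mem hU) j

theorem rpow_eq_rpow_of_le_sum_mem_doublyStochastic_mul [DecidableEq ι] {p q : ℝ}
    (hpq : p.HolderConjugate q) {s : Matrix ι ι ℝ} (hs : s ∈ doublyStochastic ℝ ι) {α β : ι → ℝ}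
    (hα : ∀ i, 0 ≤ α i) (hβ : ∀ j, 0 ≤ β j)
    (h : (∑ i, α i ^ p) / p + (∑ j, β j ^ q) / q ≤ ∑ i, ∑ j, s i j * (α i * β j))
    {i j : ι} (hij : s i j ≠ 0) : α i ^ p = β j ^ q := by
  have weighted_young (k : ι × ι) :
      s k.1 k.2 * (α k.1 * β k.2) ≤ s k.1 k.2 * (α k.1 ^ p / p + β k.2 ^ q / q) :=
    mul_le_mul_of_nonneg_left (Real.young_inequality_of_nonneg (hα _) (hβ _) hpq)
      (nonneg_of_mem_doublyStochastic hs)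
  have sum_young : ∑ k : ι × ι, s k.1 k.2 * (α k.1 ^ p / p + β k.2 ^ q / q) =
      (∑ i, α i ^ p) / p + (∑ j, β j ^ q) / q := by
    simp only [mul_add, Finset.sum_add_distrib]
    rw [Fintype.sum_prod_type, Fintype.sum_prod_type_right]
    simp only [← Finset.sum_mul, sum_row_of_mem_doublyStochastic hs,
      sum_col_of_mem_doublyStochastic hs, one_mul, Finset.sum_div]
  rw [← sum_young, ← Fintype.sum_prod_type'] at h
  have young_eq := (Finset.sum_eq_sum_iff_of_le fun k _ ↦ weighted_young k).1
    (h.antisymm' (Finset.sum_le_sum fun k _ ↦ weighted_young k)) (i, j) (Finset.mem_univ _)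
  exact (Real.young_inequality_eq_iff_of_nonneg (hα i) (hβ j) hpq).1 (mul_left_cancel₀ hij young_eq)

theorem re_trace_mul_diagonal_mul_mul_diagonal_le [DecidableEq ι] [DecidableEq κ]
    (N : Matrix κ ι 𝕜) (M : Matrix ι κ 𝕜) {α : ι → ℝ} {β : κ → ℝ} (hα : ∀ i, 0 ≤ α i)
    (hβ : ∀ j, 0 ≤ β j) :
    RCLike.re (trace (N * diagonal (fun i ↦ (α i : 𝕜)) * M * diagonal (fun j ↦ (β j : 𝕜)))) ≤
      ∑ i, ∑ j, (‖N j i‖ ^ 2 + ‖M i j‖ ^ 2) / 2 * (α i * β j) := by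
  have trace_eq : trace (N * diagonal (fun i ↦ (α i : 𝕜)) * M * diagonal (fun j ↦ (β j : 𝕜))) =
      ∑ i, ∑ j, N j i * α i * M i j * β j := by
    rw [Finset.sum_comm, trace]
    refine Finset.sum_congr rfl fun j _ ↦ ?_
    rw [diag_apply, mul_diagonal, mul_apply, Finset.sum_mul]
    simp only [mul_diagonal]
  rw [trace_eq, map_sum]
  simp only [map_sum]
  refine Finset.sum_le_sum fun i _ ↦ Finset.sum_le_sum fun j _ ↦ ?_
  calc RCLike.re (N j i * α i * M i j * β j)
      ≤ ‖N j i * α i * M i j * β j‖ := RCLike.re_le_norm _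
    _ = ‖N j i‖ * ‖M i j‖ * (α i * β j) := by
      simp only [norm_mul, RCLike.norm_of_nonneg (hα i), RCLike.norm_of_nonneg (hβ j)]
      ring
    _ ≤ (‖N j i‖ ^ 2 + ‖M i j‖ ^ 2) / 2 * (α i * β j) := by
      gcongr
      · exact mul_nonneg (hα i) (hβ j)
      · linarith [two_mul_le_add_sq ‖N j i‖ ‖M i j‖]

theorem rpow_eq_rpow_of_le_re_trace_mul_diagonal_mul_mul_diagonal [DecidableEq ι] {p q : ℝ}
    (hpq : p.HolderConjugate q) {N M : Matrix ι ι 𝕜} (hN : N ∈ unitaryGroup ι 𝕜)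
    (hM : M ∈ unitaryGroup ι 𝕜) {α β : ι → ℝ} (hα : ∀ i, 0 ≤ α i) (hβ : ∀ j, 0 ≤ β j)
    (h : (∑ i, α i ^ p) / p + (∑ j, β j ^ q) / q ≤
      RCLike.re (trace (N * diagonal (fun i ↦ (α i : 𝕜)) * M * diagonal (fun j ↦ (β j : 𝕜)))))
    {i j : ι} (hij : M i j ≠ 0) : α i ^ p = β j ^ q := by
  let s : Matrix ι ι ℝ := (1 / 2 : ℝ) • (N.map (‖·‖ ^ 2))ᵀ + (1 / 2 : ℝ) • M.map (‖·‖ ^ 2)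
  have hs : s ∈ doublyStochastic ℝ ι :=
    convex_doublyStochastic
      (transpose_mem_doublyStochastic_iff.2 (map_norm_sq_mem_doublyStochastic hN))
      (map_norm_sq_mem_doublyStochastic hM) (by norm_num) (by norm_num) (by norm_num)
  have s_apply (i j) : s i j = (‖N j i‖ ^ 2 + ‖M i j‖ ^ 2) / 2 := by
    simp only [s, Matrix.add_apply, Matrix.smul_apply, transpose_apply, map_apply, smul_eq_mul]
    ring
  refine rpow_eq_rpow_of_le_sum_mem_doublyStochastic_mul hpq hs hα hβ ?_ ?_ (i := i) (j := j)
  · simp only [s_apply]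
    exact h.trans (re_trace_mul_diagonal_mul_mul_diagonal_le N M hα hβ)
  · have : 0 < ‖M i j‖ := norm_pos_iff.2 hij
    rw [s_apply]
    positivity

end DoublyStochastic

section FunctionalCalculus

variable {ι 𝕜 : Type*} [Fintype ι] [DecidableEq ι] [RCLike 𝕜] {A B : Matrix ι ι 𝕜}

theorem cfc_eq_eigenvectorUnitary_mul_diagonal_mul (hA : A.IsHermitian) (f : ℝ → ℝ) :
    cfc f A = hA.eigenvectorUnitary * diagonal (fun i ↦ (f (hA.eigenvalues i) : 𝕜)) *
      (hA.eigenvectorUnitary : Matrix ι ι 𝕜)ᴴ := by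
  rw [hA.cfc_eq, IsHermitian.cfc, Unitary.conjStarAlgAut_apply]
  rfl

theorem re_trace_cfc (hA : A.IsHermitian) (f : ℝ → ℝ) :
    RCLike.re (trace (cfc f A)) = ∑ i, f (hA.eigenvalues i) := by
  rw [cfc_eq_eigenvectorUnitary_mul_diagonal_mul hA, trace_mul_comm, ← mul_assoc,
    ← star_eq_conjTranspose, Unitary.coe_star_mul_self, one_mul, trace_diagonal, map_sum]
  simp only [RCLike.ofReal_re]

theorem cfc_eq_cfc_of_eigenvalues (hA : A.IsHermitian) (hB : B.IsHermitian) {f g : ℝ → ℝ}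
    (h : ∀ i j, ((hA.eigenvectorUnitary : Matrix ι ι 𝕜)ᴴ * hB.eigenvectorUnitary) i j ≠ 0 →
      f (hA.eigenvalues i) = g (hB.eigenvalues j)) : cfc f A = cfc g B := by
  rw [cfc_eq_eigenvectorUnitary_mul_diagonal_mul hA, cfc_eq_eigenvectorUnitary_mul_diagonal_mul hB]
  set P := (hA.eigenvectorUnitary : Matrix ι ι 𝕜)
  set Q := (hB.eigenvectorUnitary : Matrix ι ι 𝕜)
  set D := diagonal (fun i ↦ (f (hA.eigenvalues i) : 𝕜))
  set E := diagonal (fun j ↦ (g (hB.eigenvalues j) : 𝕜))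
  have intertwine : D * (Pᴴ * Q) = Pᴴ * Q * E := by
    ext i j
    rw [diagonal_mul, mul_diagonal, mul_comm]
    by_cases hij : (Pᴴ * Q) i j = 0
    · rw [hij, zero_mul, zero_mul]
    · rw [h i j hij]
  have P_mul : P * Pᴴ = 1 := Unitary.coe_mul_star_self hA.eigenvectorUnitary
  have Q_mul : Q * Qᴴ = 1 := Unitary.coe_mul_star_self hB.eigenvectorUnitary
  calc P * D * Pᴴ = P * (D * (Pᴴ * Q)) * Qᴴ := by simp only [mul_assoc, Q_mul, mul_one]
    _ = P * Pᴴ * (Q * E * Qᴴ) := by simp only [intertwine, mul_assoc]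
    _ = Q * E * Qᴴ := by rw [P_mul, one_mul]

end FunctionalCalculus

section Rpow

variable {R : Type*} [PartialOrder R] [Ring R] [StarRing R] [TopologicalSpace R]
  [StarOrderedRing R] [Algebra ℝ R] [ContinuousFunctionalCalculus ℝ R IsSelfAdjoint]
  [NonnegSpectrumClass ℝ R] [IsSemitopologicalRing R] [T2Space R]

theorem rpow_mul_rpow_of_pos (a : R) {r s : ℝ} (hr : 0 < r) (hs : 0 < s) :
    a ^ r * a ^ s = a ^ (r + s) := by
  lift r to NNReal using hr.le
  lift s to NNReal using hs.le
  rw [NNReal.coe_pos] at hr hs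
  rw [← NNReal.coe_add, ← CFC.nnrpow_eq_rpow hr, ← CFC.nnrpow_eq_rpow hs,
    ← CFC.nnrpow_eq_rpow (add_pos hr hs), CFC.nnrpow_add hr hs]

theorem rpow_rpow_one_div {a : R} (ha : 0 ≤ a) {r : ℝ} (hr : 0 < r) : (a ^ r) ^ (1 / r) = a := by
  rw [CFC.rpow_rpow_of_exponent_nonneg a r (1 / r) hr.le (one_div_pos.2 hr).le,
    mul_one_div_cancel hr.ne', CFC.rpow_one a]

variable [PosSMulMono ℝ R]

theorem smul_rpow_of_nonneg {c r : ℝ} (hc : 0 ≤ c) (hr : 0 ≤ r) {a : R} (ha : 0 ≤ a) :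
    (c • a) ^ r = c ^ r • a ^ r := by
  have rpow_continuousOn (s : Set ℝ) : ContinuousOn (· ^ r) s :=
    (Real.continuous_rpow_const hr).continuousOn
  rw [CFC.rpow_eq_cfc_real (smul_nonneg hc ha), CFC.rpow_eq_cfc_real ha,
    ← cfc_comp_smul c _ a (rpow_continuousOn _), ← cfc_smul _ _ a (rpow_continuousOn _)]
  exact cfc_congr fun t ht ↦ Real.mul_rpow hc (spectrum_nonneg_of_nonneg ha ht)

theorem mul_eq_smul_rpow_of_rpow_eq_smul_rpow {p q : ℝ} (hpq : p.HolderConjugate q) {a b : R}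
    (ha : 0 ≤ a) (hb : 0 ≤ b) {c : ℝ} (hc : 0 ≤ c) (h : a ^ p = c • b ^ q) :
    a * b = c ^ (1 / p) • b ^ q := by
  have a_eq : a = c ^ (1 / p) • b ^ (q / p) := by
    rw [← rpow_rpow_one_div ha hpq.pos, h, smul_rpow_of_nonneg hc hpq.one_div_nonneg
      CFC.rpow_nonneg, CFC.rpow_rpow_of_exponent_nonneg b _ _ hpq.symm.nonneg hpq.one_div_nonneg,
      mul_one_div]
  have exponent : q / p + 1 = q := by rw [hpq.symm.div_conj_eq_sub_one, sub_add_cancel]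
  calc a * b = c ^ (1 / p) • (b ^ (q / p) * b ^ (1 : ℝ)) := by
        rw [CFC.rpow_one b, ← smul_mul_assoc, ← a_eq]
    _ = c ^ (1 / p) • b ^ q := by
        rw [rpow_mul_rpow_of_pos b (div_pos hpq.symm.pos hpq.pos) one_pos, exponent]

end Rpow

open scoped MatrixOrder

section PositiveSemidefinite

variable {ι 𝕜 : Type*} [Fintype ι] [RCLike 𝕜] {A B : Matrix ι ι 𝕜}

theorem re_trace_nonneg (hA : 0 ≤ A) : 0 ≤ RCLike.re (trace A) :=
  (RCLike.nonneg_iff.1 hA.posSemidef.trace_nonneg).1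

theorem re_trace_pos (hA : 0 ≤ A) (hA₀ : A ≠ 0) : 0 < RCLike.re (trace A) :=
  (RCLike.pos_iff.1 <| hA.posSemidef.trace_nonneg.lt_of_ne' <|
    hA.posSemidef.trace_eq_zero_iff.not.2 hA₀).1

variable [DecidableEq ι]

theorem rpow_eq_rpow_of_le_re_trace_unitary_mul_mul {p q : ℝ} (hpq : p.HolderConjugate q)
    (hA : 0 ≤ A) (hB : 0 ≤ B) {W : Matrix ι ι 𝕜} (hW : W ∈ unitaryGroup ι 𝕜)
    (h : RCLike.re (trace (A ^ p)) / p + RCLike.re (trace (B ^ q)) / q ≤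
      RCLike.re (trace (W * A * B))) : A ^ p = B ^ q := by
  have hA' := hA.posSemidef.isHermitian
  have hB' := hB.posSemidef.isHermitian
  rw [CFC.rpow_eq_cfc_real hA, CFC.rpow_eq_cfc_real hB] at h ⊢
  rw [re_trace_cfc hA', re_trace_cfc hB'] at h
  let P := hA'.eigenvectorUnitary
  let Q := hB'.eigenvectorUnitary
  let D : Matrix ι ι 𝕜 := diagonal fun i ↦ (hA'.eigenvalues i : 𝕜)
  let E : Matrix ι ι 𝕜 := diagonal fun j ↦ (hB'.eigenvalues j : 𝕜)
  have A_eq : A = P * D * (P : Matrix ι ι 𝕜)ᴴ :=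
    (cfc_id ℝ A).symm.trans (cfc_eq_eigenvectorUnitary_mul_diagonal_mul hA' id)
  have B_eq : B = Q * E * (Q : Matrix ι ι 𝕜)ᴴ :=
    (cfc_id ℝ B).symm.trans (cfc_eq_eigenvectorUnitary_mul_diagonal_mul hB' id)
  let M : Matrix ι ι 𝕜 := (P : Matrix ι ι 𝕜)ᴴ * Q
  let N : Matrix ι ι 𝕜 := (Q : Matrix ι ι 𝕜)ᴴ * W * P
  have hM : M ∈ unitaryGroup ι 𝕜 := mul_mem (Unitary.star_mem P.2) Q.2
  have hN : N ∈ unitaryGroup ι 𝕜 := mul_mem (mul_mem (Unitary.star_mem Q.2) hW) P.2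
  have trace_eq : trace (W * A * B) = trace (N * D * M * E) := by
    rw [A_eq, B_eq, ← mul_assoc, trace_mul_comm]
    simp only [M, N, mul_assoc]
  exact cfc_eq_cfc_of_eigenvalues hA' hB' fun i j hij ↦
    rpow_eq_rpow_of_le_re_trace_mul_diagonal_mul_mul_diagonal hpq hN hM
      hA.posSemidef.eigenvalues_nonneg hB.posSemidef.eigenvalues_nonneg (trace_eq ▸ h) hij

end PositiveSemidefinite

section SchattenNorm

variable {ι 𝕜 : Type*} [Fintype ι] [DecidableEq ι] [RCLike 𝕜] {A B x : Matrix ι ι 𝕜} {p q r : ℝ}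

/-- The Schatten `r`-norm `(Tr |x|ʳ)^(1/r)` of a square real or complex matrix; the trace is
nonnegative, so its real part loses nothing. -/
noncomputable def schattenNorm (r : ℝ) (x : Matrix ι ι 𝕜) : ℝ :=
  RCLike.re (trace (CFC.abs x ^ r)) ^ (1 / r)

theorem schattenNorm_one (x : Matrix ι ι 𝕜) :
    schattenNorm 1 x = RCLike.re (trace (CFC.abs x)) := by
  rw [schattenNorm, CFC.rpow_one _, one_div_one, Real.rpow_one]

theorem schattenNorm_abs (r : ℝ) (x : Matrix ι ι 𝕜) :
    schattenNorm r (CFC.abs x) = schattenNorm r x := by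
  rw [schattenNorm, schattenNorm, CFC.cfcAbs_cfcAbs]

theorem schattenNorm_rpow (hr : r ≠ 0) (x : Matrix ι ι 𝕜) :
    schattenNorm r x ^ r = RCLike.re (trace (CFC.abs x ^ r)) := by
  rw [schattenNorm, ← Real.rpow_mul (re_trace_nonneg CFC.rpow_nonneg), one_div_mul_cancel hr,
    Real.rpow_one]

theorem schattenNorm_pos (hr : 0 < r) (hx : x ≠ 0) : 0 < schattenNorm r x := by
  have abs_ne_zero : CFC.abs x ≠ 0 := fun h ↦ hx <| by
    rw [← conjTranspose_mul_self_eq_zero, ← star_eq_conjTranspose, ← CFC.abs_mul_abs, h, mul_zero]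
  refine Real.rpow_pos_of_pos (re_trace_pos CFC.rpow_nonneg fun h ↦ abs_ne_zero ?_) _
  rw [← rpow_rpow_one_div (CFC.abs_nonneg x) hr, h]
  exact CFC.zero_rpow (one_div_pos.2 hr).ne'

theorem exists_mem_unitaryGroup_eq_mul_abs (x : Matrix ι ι 𝕜) :
    ∃ U ∈ unitaryGroup ι 𝕜, x = U * CFC.abs x :=
  exists_mem_unitaryGroup_eq_mul_of_conjTranspose_mul_self_eq <| by
    rw [(CFC.abs_nonneg x).posSemidef.isHermitian.eq, CFC.abs_mul_abs, star_eq_conjTranspose]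

theorem abs_unitary_mul_mul_conjTranspose {U V : Matrix ι ι 𝕜} (hU : U ∈ unitaryGroup ι 𝕜)
    (hV : V ∈ unitaryGroup ι 𝕜) (x : Matrix ι ι 𝕜) :
    CFC.abs (U * x * Vᴴ) = V * CFC.abs x * Vᴴ := by
  refine CFC.sqrt_unique ?_ (star_right_conjugate_nonneg (CFC.abs_nonneg x) V)
  have hU' : Uᴴ * U = 1 := mem_unitaryGroup_iff'.1 hU
  have hV' : Vᴴ * V = 1 := mem_unitaryGroup_iff'.1 hV
  calc V * CFC.abs x * Vᴴ * (V * CFC.abs x * Vᴴ)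
      = V * CFC.abs x * (Vᴴ * V) * CFC.abs x * Vᴴ := by simp only [mul_assoc]
    _ = V * (xᴴ * x) * Vᴴ := by
        rw [hV', mul_one, mul_assoc V, CFC.abs_mul_abs, star_eq_conjTranspose]
    _ = V * xᴴ * (Uᴴ * U) * x * Vᴴ := by simp only [hU', mul_one, mul_assoc]
    _ = star (U * x * Vᴴ) * (U * x * Vᴴ) := by
        simp only [star_eq_conjTranspose, conjTranspose_mul, conjTranspose_conjTranspose, mul_assoc]

theorem schattenNorm_one_mul_conjTranspose (a b : Matrix ι ι 𝕜) :
    schattenNorm 1 (a * bᴴ) = schattenNorm 1 (CFC.abs a * CFC.abs b) := by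
  obtain ⟨U, hU, ha⟩ := exists_mem_unitaryGroup_eq_mul_abs a
  obtain ⟨V, hV, hb⟩ := exists_mem_unitaryGroup_eq_mul_abs b
  have polar : a * bᴴ = U * (CFC.abs a * CFC.abs b) * Vᴴ := by
    conv_lhs => rw [ha, hb, conjTranspose_mul, (CFC.abs_nonneg b).posSemidef.isHermitian.eq]
    simp only [mul_assoc]
  have hV' : Vᴴ * V = 1 := mem_unitaryGroup_iff'.1 hV
  rw [schattenNorm_one, schattenNorm_one, polar, abs_unitary_mul_mul_conjTranspose hU hV,
    trace_mul_comm, ← mul_assoc, hV', one_mul]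

theorem re_trace_inv_schattenNorm_smul_rpow (hr : 0 < r) (hA : 0 ≤ A)
    (norm_pos : 0 < schattenNorm r A) :
    RCLike.re (trace (((schattenNorm r A)⁻¹ • A) ^ r)) = 1 := by
  have norm_rpow := schattenNorm_rpow hr.ne' A
  rw [CFC.abs_of_nonneg A] at norm_rpow
  rw [smul_rpow_of_nonneg (inv_nonneg.2 norm_pos.le) hr.le hA, trace_smul, RCLike.smul_re,
    ← norm_rpow, Real.inv_rpow norm_pos.le, inv_mul_cancel₀ (Real.rpow_pos_of_pos norm_pos r).ne']

theorem exists_mem_unitaryGroup_re_trace_mul_eq_schattenNorm_one (x : Matrix ι ι 𝕜) :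
    ∃ W ∈ unitaryGroup ι 𝕜, RCLike.re (trace (W * x)) = schattenNorm 1 x := by
  obtain ⟨U, hU, hx⟩ := exists_mem_unitaryGroup_eq_mul_abs x
  have hU' : Uᴴ * U = 1 := mem_unitaryGroup_iff'.1 hU
  refine ⟨Uᴴ, Unitary.star_mem hU, ?_⟩
  nth_rewrite 1 [hx]
  rw [← mul_assoc, hU', one_mul, schattenNorm_one]

theorem rpow_eq_smul_rpow_of_schattenNorm_one_mul_eq (hpq : p.HolderConjugate q) (hA : 0 ≤ A)
    (hB : 0 ≤ B) (hs : 0 < schattenNorm p A) (ht : 0 < schattenNorm q B)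
    (h : schattenNorm 1 (A * B) = schattenNorm p A * schattenNorm q B) :
    A ^ p = (schattenNorm p A ^ p / schattenNorm q B ^ q) • B ^ q := by
  have hA_trace := re_trace_inv_schattenNorm_smul_rpow hpq.pos hA hs
  have hB_trace := re_trace_inv_schattenNorm_smul_rpow hpq.symm.pos hB ht
  set s := schattenNorm p A
  set t := schattenNorm q B
  obtain ⟨W, hW, trace_W⟩ := exists_mem_unitaryGroup_re_trace_mul_eq_schattenNorm_one (A * B)
  have normalized_trace : RCLike.re (trace (W * (s⁻¹ • A) * (t⁻¹ • B))) = 1 := by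
    rw [mul_assoc, smul_mul_smul_comm, mul_smul_comm, trace_smul, RCLike.smul_re, trace_W, h,
      ← mul_inv, inv_mul_cancel₀ (mul_pos hs ht).ne']
  have normalized_eq : (s⁻¹ • A) ^ p = (t⁻¹ • B) ^ q := by
    refine rpow_eq_rpow_of_le_re_trace_unitary_mul_mul hpq (smul_nonneg (inv_nonneg.2 hs.le) hA)
      (smul_nonneg (inv_nonneg.2 ht.le) hB) hW ?_
    rw [hA_trace, hB_trace, normalized_trace, one_div, one_div, hpq.inv_add_inv_eq_one]
  rw [smul_rpow_of_nonneg (inv_nonneg.2 hs.le) hpq.nonneg hA,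
    smul_rpow_of_nonneg (inv_nonneg.2 ht.le) hpq.symm.nonneg hB, Real.inv_rpow hs.le,
    Real.inv_rpow ht.le, inv_smul_eq_iff₀ (Real.rpow_pos_of_pos hs p).ne', smul_smul,
    ← div_eq_mul_inv] at normalized_eq
  exact normalized_eq

theorem schattenNorm_one_mul_eq_of_rpow_eq_smul_rpow (hpq : p.HolderConjugate q) (hA : 0 ≤ A)
    (hB : 0 ≤ B) {c : ℝ} (hc : 0 ≤ c) (h : A ^ p = c • B ^ q) :
    schattenNorm 1 (A * B) = schattenNorm p A * schattenNorm q B := by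
  have mul_eq := mul_eq_smul_rpow_of_rpow_eq_smul_rpow hpq hA hB hc h
  have AB_nonneg : 0 ≤ A * B :=
    mul_eq ▸ smul_nonneg (Real.rpow_nonneg hc _) CFC.rpow_nonneg
  have hT : 0 ≤ RCLike.re (trace (B ^ q)) := re_trace_nonneg CFC.rpow_nonneg
  rw [schattenNorm_one, schattenNorm, schattenNorm, CFC.abs_of_nonneg _ AB_nonneg,
    CFC.abs_of_nonneg A, CFC.abs_of_nonneg B, h, mul_eq, trace_smul, trace_smul, RCLike.smul_re,
    RCLike.smul_re, Real.mul_rpow hc hT, mul_assoc,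
    ← Real.rpow_add_of_nonneg hT hpq.one_div_nonneg hpq.symm.one_div_nonneg, one_div p, one_div q,
    hpq.inv_add_inv_eq_one, Real.rpow_one]

theorem holder_equality_iff_proportional_general (hpq : p.HolderConjugate q) (a : Matrix ι ι 𝕜)
    {b : Matrix ι ι 𝕜} (hb : b ≠ 0) :
    schattenNorm 1 (a * bᴴ) = schattenNorm p a * schattenNorm q b ↔
      ∃ c : ℝ, 0 ≤ c ∧ CFC.abs a ^ p = c • CFC.abs b ^ q := by
  rw [schattenNorm_one_mul_conjTranspose, ← schattenNorm_abs p a, ← schattenNorm_abs q b]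
  constructor
  · intro h
    rcases eq_or_ne a 0 with rfl | ha
    · refine ⟨0, le_rfl, ?_⟩
      rw [CFC.abs_zero, zero_smul]
      exact CFC.zero_rpow hpq.ne_zero
    · have norm_a_pos : 0 < schattenNorm p (CFC.abs a) :=
        (schattenNorm_abs p a).symm ▸ schattenNorm_pos hpq.pos ha
      have norm_b_pos : 0 < schattenNorm q (CFC.abs b) :=
        (schattenNorm_abs q b).symm ▸ schattenNorm_pos hpq.symm.pos hb
      exact ⟨_, by positivity, rpow_eq_smul_rpow_of_schattenNorm_one_mul_eq hpq
        (CFC.abs_nonneg a) (CFC.abs_nonneg b) norm_a_pos norm_b_pos h⟩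
  · rintro ⟨c, hc, h⟩
    exact schattenNorm_one_mul_eq_of_rpow_eq_smul_rpow hpq (CFC.abs_nonneg a) (CFC.abs_nonneg b)
      hc h

end SchattenNorm

theorem matRpow_matAbs {n : ℕ} (x : Matrix (Fin n) (Fin n) ℂ) (r : ℝ) :
    matRpow (matAbs x) r = CFC.abs x ^ r :=
  (CFC.rpow_eq_cfc_real (CFC.abs_nonneg x)).symm

theorem schatten_eq_schattenNorm {n : ℕ} (r : ℝ) (x : Matrix (Fin n) (Fin n) ℂ) :
    schatten r x = schattenNorm r x := by
  rw [schatten, matRpow_matAbs]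
  rfl

theorem holder_equality_iff_proportional {n : ℕ} (hn : 1 ≤ n)
    (a b : Matrix (Fin n) (Fin n) ℂ) (ha : a ≠ 0) (hb : b ≠ 0) (p q : ℝ)
    (hp : 1 < p) (hq : 1 < q) (hpq : 1 / p + 1 / q = 1) :
    schatten 1 (a * bᴴ) = schatten p a * schatten q b ↔
      ∃ lam : ℝ, 0 ≤ lam ∧ matRpow (matAbs a) p = lam • matRpow (matAbs b) q := by
  simp only [schatten_eq_schattenNorm, matRpow_matAbs]
  exact holder_equality_iff_proportional_general
    (Real.holderConjugate_iff.2 ⟨hp, by simpa only [one_div] using hpq⟩) a hb
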